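/- Let n ≥ 1, let U ⊂ ℝ^n be a nonempty open, bounded, connected set, and let u ∈ W^{1,∞}(U,ℝ^n) be essentially injective with diam(u(U)) ≤ d and 0 < λ ≤ det Du(x) for a.e. x ∈ U. Then there exists a bounded Lipschitz map S : U → ℝ^n that is essentially injective and measure preserving such that ∫_U |u(x) − S(x)| dx ≤ 10 (d/λ^{1/n})(1 + 1/λ) · ∫_U |1 − det Du(x)| dx. -/

import Mathlib

open MeasureTheory Metric Set Bornology

noncomputable section

/-- The Jacobian determinant of `u` at `x` (junk value if `u` is not differentiable at `x`). -/
def detD {n : ℕ} (u : EuclideanSpace ℝ (Fin n) → EuclideanSpace ℝ (Fin n))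
    (x : EuclideanSpace ℝ (Fin n)) : ℝ :=
  LinearMap.det ((fderiv ℝ u x).toLinearMap)

/-- The multiplicity `mult_U(u)`: essential supremum of the counting function
`y ↦ #(U ∩ u⁻¹{y})`. -/
def multOn {n : ℕ} (U : Set (EuclideanSpace ℝ (Fin n)))
    (u : EuclideanSpace ℝ (Fin n) → EuclideanSpace ℝ (Fin n)) : ℕ∞ :=
  essSup (fun y => (U ∩ u ⁻¹' {y}).encard) volume


/-! ### Part 1: volume preserving Lipschitz maps permuting cells -/

lemma aux_bump {X V ι : Type*} [PseudoMetricSpace X] [NormedAddCommGroup V] [NormedSpace ℝ V]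
    (c : ι → X) (δ : ℝ) (hc : ∀ s t, s ≠ t → δ ≤ dist (c s) (c t)) (φ : ι → V) (T : Finset ι) :
    ∃ R : ℝ, ∀ η : ℝ, 0 < η → ∃ f : X → V, (∃ K, LipschitzWith K f) ∧ (∀ x, ‖f x‖ ≤ R) ∧
      ∀ t ∈ T, ∀ x, dist x (c t) ≤ δ / 2 - η → f x = φ t := by
  classical
  refine ⟨∑ t ∈ T, ‖φ t‖, fun η hη => ?_⟩
  set ψ : ι → X → ℝ := fun t x => max 0 (min 1 ((δ / 2 - dist x (c t)) / η)) with hψ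
  have hψ0 : ∀ t x, 0 ≤ ψ t x := fun t x => le_max_left _ _
  have hψ1 : ∀ t x, ψ t x ≤ 1 := fun t x => max_le zero_le_one (min_le_left _ _)
  have hψL : ∀ t, ∃ K, LipschitzWith K (ψ t) := by
    intro t
    have h1 : LipschitzWith (Real.toNNReal (1 / η)) (fun x => (δ / 2 - dist x (c t)) / η) := by
      refine LipschitzWith.of_dist_le_mul fun x y => ?_
      rw [Real.coe_toNNReal _ (by positivity), Real.dist_eq, ← sub_div, abs_div, abs_of_pos hη,
        div_mul_eq_mul_div, one_mul]
      gcongr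
      rw [show δ / 2 - dist x (c t) - (δ / 2 - dist y (c t)) = -(dist x (c t) - dist y (c t)) by
        ring, abs_neg]
      exact abs_dist_sub_le x y (c t)
    exact ⟨_, (h1.const_min 1).const_max 0⟩
  refine ⟨fun x => ∑ t ∈ T, ψ t x • φ t, ?_, ?_, ?_⟩
  · induction T using Finset.induction with
    | empty => exact ⟨0, by simp⟩
    | insert a s ha ih =>
      obtain ⟨K, hK⟩ := ih
      obtain ⟨K1, hK1⟩ := hψL a
      have h2 : LipschitzWith (K1 * ‖φ a‖₊) (fun x => ψ a x • φ a) := by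
        refine LipschitzWith.of_dist_le_mul fun x y => ?_
        rw [dist_eq_norm, ← sub_smul, norm_smul]
        have := hK1.dist_le_mul x y
        rw [Real.dist_eq] at this
        calc _ ≤ (K1 * dist x y) * ‖φ a‖ := by gcongr; exact this
          _ = _ := by push_cast; ring
      refine ⟨K1 * ‖φ a‖₊ + K, ?_⟩
      simpa [Finset.sum_insert ha] using h2.add hK
  · intro x
    refine (norm_sum_le _ _).trans (Finset.sum_le_sum fun t _ => ?_)
    rw [norm_smul, Real.norm_of_nonneg (hψ0 t x)]
    exact mul_le_of_le_one_left (norm_nonneg _) (hψ1 t x)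
  · intro t ht x hx
    have e1 : ψ t x = 1 := by
      have : 1 ≤ (δ / 2 - dist x (c t)) / η := by rw [le_div_iff₀ hη]; linarith
      simp [hψ, min_eq_left this]
    have e0 : ∀ s, s ≠ t → ψ s x = 0 := by
      intro s hs
      have h3 := hc s t hs
      have h4 := dist_triangle_left (c s) (c t) x
      have : (δ / 2 - dist x (c s)) / η ≤ 0 :=
        div_nonpos_of_nonpos_of_nonneg (by linarith) hη.le
      simp only [hψ]
      exact max_eq_left ((min_le_right _ _).trans this)
    rw [show (fun x => ∑ t ∈ T, ψ t x • φ t) x = ∑ t ∈ T, ψ t x • φ t from rfl,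
      Finset.sum_eq_single t (fun s _ hs => by rw [e0 s hs, zero_smul]) (fun h => absurd ht h),
      e1, one_smul]

/-- centre of a cell -/
def ctr1 (δ : ℝ) (k : ℤ) : ℝ := ((k : ℝ) + 1 / 2) * δ

def ctrm {m : ℕ} (δ : ℝ) (k : Fin m → ℤ) : Fin m → ℝ := fun j => ctr1 δ (k j)

def ctrp {m : ℕ} (δ : ℝ) (p : ℤ × (Fin m → ℤ)) : ℝ × (Fin m → ℝ) := (ctr1 δ p.1, ctrm δ p.2)

lemma ctr1_sep (δ : ℝ) (hδ : 0 < δ) (s t : ℤ) (h : s ≠ t) : δ ≤ dist (ctr1 δ s) (ctr1 δ t) := by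
  rw [Real.dist_eq, ctr1, ctr1, ← sub_mul, abs_mul, abs_of_pos hδ]
  have : (1 : ℝ) ≤ |(s : ℝ) + 1 / 2 - (t + 1 / 2)| := by
    rw [add_sub_add_right_eq_sub]
    exact_mod_cast Int.one_le_abs (sub_ne_zero.2 h)
  nlinarith

lemma ctrm_sep {m : ℕ} (δ : ℝ) (hδ : 0 < δ) (s t : Fin m → ℤ) (h : s ≠ t) :
    δ ≤ dist (ctrm δ s) (ctrm δ t) := by
  obtain ⟨j, hj⟩ := Function.ne_iff.1 h
  exact (ctr1_sep δ hδ _ _ hj).trans (dist_le_pi_dist (ctrm δ s) (ctrm δ t) j)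

/-- cells `P i` can be moved to cells `Q i`. -/
def Mov {m : ℕ} {I : Type} (δ : ℝ) (P Q : I → ℤ × (Fin m → ℤ)) : Prop :=
  ∃ R : ℝ, ∀ η : ℝ, 0 < η → ∃ S : ℝ × (Fin m → ℝ) → ℝ × (Fin m → ℝ),
    (∃ K, LipschitzWith K S) ∧ Function.Injective S ∧ MeasurePreserving S volume volume ∧
    (∀ x, dist (S x) x ≤ R) ∧
    ∀ i x, dist x (ctrp δ (P i)) ≤ δ / 2 - η → S x = x + (ctrp δ (Q i) - ctrp δ (P i))

lemma Mov.trans {m : ℕ} {I : Type} {δ : ℝ} {P Q W : I → ℤ × (Fin m → ℤ)}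
    (h1 : Mov δ P Q) (h2 : Mov δ Q W) : Mov δ P W := by
  obtain ⟨R1, h1⟩ := h1
  obtain ⟨R2, h2⟩ := h2
  refine ⟨R2 + R1, fun η hη => ?_⟩
  obtain ⟨S1, ⟨K1, l1⟩, i1, m1, d1, t1⟩ := h1 η hη
  obtain ⟨S2, ⟨K2, l2⟩, i2, m2, d2, t2⟩ := h2 η hη
  refine ⟨S2 ∘ S1, ⟨_, l2.comp l1⟩, i2.comp i1, m2.comp m1, fun x => ?_, fun i x hx => ?_⟩
  · exact (dist_triangle _ (S1 x) _).trans (add_le_add (d2 _) (d1 _))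
  · have e1 := t1 i x hx
    have : dist (S1 x) (ctrp δ (Q i)) ≤ δ / 2 - η := by
      rw [e1, dist_eq_norm, show x + (ctrp δ (Q i) - ctrp δ (P i)) - ctrp δ (Q i)
        = x - ctrp δ (P i) by abel, ← dist_eq_norm]
      exact hx
    rw [Function.comp_apply, t2 i _ this, e1]
    abel

lemma mov_A {m : ℕ} {I : Type} [Fintype I] {δ : ℝ} (hδ : 0 < δ) (P : I → ℤ × (Fin m → ℤ))
    (φ : (Fin m → ℤ) → ℤ) : Mov δ P (fun i => ((P i).1 + φ (P i).2, (P i).2)) := by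
  classical
  obtain ⟨R, hR⟩ := aux_bump (ctrm δ) δ (ctrm_sep δ hδ) (fun t => (φ t : ℝ) * δ)
    (Finset.univ.image fun i => (P i).2)
  refine ⟨R, fun η hη => ?_⟩
  obtain ⟨f, ⟨K, hK⟩, hb, ht⟩ := hR η hη
  refine ⟨fun x => (x.1 + f x.2, x.2), ⟨_, (LipschitzWith.prod_fst.add
    (hK.comp LipschitzWith.prod_snd)).prodMk LipschitzWith.prod_snd⟩, ?_, ?_, ?_, ?_⟩
  · rintro ⟨a, b⟩ ⟨a', b'⟩ h
    simp only [Prod.mk.injEq] at h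
    obtain ⟨h1, rfl⟩ := h
    simp at h1
    rw [h1]
  · have h1 : MeasurePreserving (fun p : (Fin m → ℝ) × ℝ => (p.1, p.2 + f p.1))
        (volume.prod volume) (volume.prod volume) := by
      refine MeasurePreserving.skew_product (g := fun b a => a + f b)
        (MeasurePreserving.id _) ?_ (Filter.Eventually.of_forall fun b => ?_)
      · exact measurable_snd.add (hK.continuous.measurable.comp measurable_fst)
      · exact map_add_right_eq_self _ _
    exact Measure.measurePreserving_swap.comp (h1.comp Measure.measurePreserving_swap)
  · intro x
    rw [Prod.dist_eq]
    simp only [dist_self]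
    refine max_le ?_ ((norm_nonneg _).trans (hb x.2))
    simpa [Real.dist_eq] using hb x.2
  · intro i x hx
    rw [Prod.dist_eq] at hx
    have := ht (P i).2 (Finset.mem_image_of_mem _ (Finset.mem_univ i)) x.2
      ((le_max_right _ _).trans hx)
    ext j
    · simp [this, ctrp, ctr1]; ring
    · simp [ctrp]

lemma mov_B {m : ℕ} {I : Type} [Fintype I] {δ : ℝ} (hδ : 0 < δ) (P : I → ℤ × (Fin m → ℤ))
    (φ : ℤ → (Fin m → ℤ)) : Mov δ P (fun i => ((P i).1, (P i).2 + φ (P i).1)) := by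
  classical
  obtain ⟨R, hR⟩ := aux_bump (ctr1 δ) δ (ctr1_sep δ hδ) (fun t j => (φ t j : ℝ) * δ)
    (Finset.univ.image fun i => (P i).1)
  refine ⟨R, fun η hη => ?_⟩
  obtain ⟨f, ⟨K, hK⟩, hb, ht⟩ := hR η hη
  refine ⟨fun x => (x.1, x.2 + f x.1), ⟨_, LipschitzWith.prod_fst.prodMk (LipschitzWith.prod_snd.add
    (hK.comp LipschitzWith.prod_fst))⟩, ?_, ?_, ?_, ?_⟩
  · rintro ⟨a, b⟩ ⟨a', b'⟩ h
    simp only [Prod.mk.injEq] at h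
    obtain ⟨rfl, h1⟩ := h
    simp at h1
    rw [h1]
  · refine MeasurePreserving.skew_product (g := fun b a => a + f b)
        (MeasurePreserving.id _) ?_ (Filter.Eventually.of_forall fun b => ?_)
    · exact measurable_snd.add (hK.continuous.measurable.comp measurable_fst)
    · exact map_add_right_eq_self _ _
  · intro x
    rw [Prod.dist_eq]
    simp only [dist_self]
    refine max_le ((norm_nonneg _).trans (hb x.1)) ?_
    simpa [dist_eq_norm] using hb x.1
  · intro i x hx
    rw [Prod.dist_eq] at hx
    have := ht (P i).1 (Finset.mem_image_of_mem _ (Finset.mem_univ i)) x.1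
      ((le_max_left _ _).trans hx)
    ext j
    · simp [ctrp]
    · simp [this, ctrp, ctrm, ctr1]; ring

lemma mov_setfst {m : ℕ} {I : Type} [Fintype I] {δ : ℝ} (hδ : 0 < δ) (a a' : I → ℤ)
    (b : I → (Fin m → ℤ)) (hb : Function.Injective b) :
    Mov δ (fun i => (a i, b i)) (fun i => (a' i, b i)) := by
  have := mov_A hδ (fun i => (a i, b i)) (Function.extend b (fun i => a' i - a i) 0)
  simpa [hb.extend_apply] using this

lemma mov_setsnd {m : ℕ} {I : Type} [Fintype I] {δ : ℝ} (hδ : 0 < δ) (a : I → ℤ)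
    (b b' : I → (Fin m → ℤ)) (ha : Function.Injective a) :
    Mov δ (fun i => (a i, b i)) (fun i => (a i, b' i)) := by
  have := mov_B hδ (fun i => (a i, b i)) (Function.extend a (fun i => b' i - b i) 0)
  simpa [ha.extend_apply] using this

lemma exists_sep {m : ℕ} {I : Type} [Fintype I] (P : I → ℤ × (Fin m → ℤ))
    (hP : Function.Injective P) :
    ∃ φ : (Fin m → ℤ) → ℤ, Function.Injective (fun i => (P i).1 + φ (P i).2) := by
  set L : ℤ := ∑ i, |(P i).1| + 1 with hL
  have hb : ∀ i, |(P i).1| < L := fun i => by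
    have := Finset.single_le_sum (f := fun i => |(P i).1|) (fun i _ => abs_nonneg _)
      (Finset.mem_univ i)
    omega
  refine ⟨fun b => 2 * L * (Encodable.encode b : ℤ), fun i j hij => ?_⟩
  simp only at hij
  have hi := abs_lt.1 (hb i)
  have hj := abs_lt.1 (hb j)
  have h1 : ((Encodable.encode (P i).2 : ℤ) : ℤ) = (Encodable.encode (P j).2 : ℤ) := by
    by_contra hne
    rcases lt_or_gt_of_ne hne with h | h
    · have : (Encodable.encode (P i).2 : ℤ) + 1 ≤ (Encodable.encode (P j).2 : ℤ) := h
      nlinarith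
    · have : (Encodable.encode (P j).2 : ℤ) + 1 ≤ (Encodable.encode (P i).2 : ℤ) := h
      nlinarith
  apply hP
  have h2 : (P i).2 = (P j).2 := Encodable.encode_injective (by exact_mod_cast h1)
  rw [h1] at hij
  exact Prod.ext (by linarith) h2

lemma mov_all {m : ℕ} (hm : 1 ≤ m) {I : Type} [Fintype I] {δ : ℝ} (hδ : 0 < δ)
    (P Q : I → ℤ × (Fin m → ℤ))
    (hP : Function.Injective P) (hQ : Function.Injective Q) : Mov δ P Q := by
  obtain ⟨φ, hφ⟩ := exists_sep P hP
  obtain ⟨χ, hχ⟩ := exists_sep Q hQ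
  let e : I → (Fin m → ℤ) := fun i _ => (Fintype.equivFin I i : ℕ)
  have he : Function.Injective e := by
    intro i j hij
    have := congrFun hij ⟨0, hm⟩
    simp only [e, Nat.cast_inj] at this
    exact (Fintype.equivFin I).injective (Fin.ext this)
  have h1 := mov_A hδ P φ
  have h2 := mov_setsnd hδ _ (fun i => (P i).2) e hφ
  have h3 := mov_setfst hδ (fun i => (P i).1 + φ (P i).2) (fun i => (Q i).1 + χ (Q i).2) e he
  have h4 := mov_setsnd hδ _ e (fun i => (Q i).2) hχ
  have h5 := mov_A hδ (fun i => ((Q i).1 + χ (Q i).2, (Q i).2)) (fun b => - χ b)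
  simp only [add_neg_cancel_right, Prod.mk.eta] at h5
  exact (((h1.trans h2).trans h3).trans h4).trans h5

def toXL (m : ℕ) : EuclideanSpace ℝ (Fin (m + 1)) →ₗ[ℝ] ℝ × (Fin m → ℝ) where
  toFun x := (x 0, fun j => x j.succ)
  map_add' x y := by ext <;> simp
  map_smul' c x := by ext <;> simp

def ofXL (m : ℕ) : ℝ × (Fin m → ℝ) →ₗ[ℝ] EuclideanSpace ℝ (Fin (m + 1)) where
  toFun p := WithLp.toLp 2 (Fin.cons p.1 p.2)
  map_add' x y := by ext j; refine Fin.cases ?_ (fun j => ?_) j <;> simp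
  map_smul' c x := by ext j; refine Fin.cases ?_ (fun j => ?_) j <;> simp

lemma toXL_ofXL (m : ℕ) (p) : toXL m (ofXL m p) = p := by
  ext <;> simp [toXL, ofXL]

lemma ofXL_toXL (m : ℕ) (x) : ofXL m (toXL m x) = x := by
  ext j; refine Fin.cases ?_ (fun j => ?_) j <;> simp [toXL, ofXL]

lemma mp_toXL (m : ℕ) : MeasurePreserving (toXL m) volume volume :=
  (volume_preserving_piFinSuccAbove (fun _ : Fin (m + 1) => ℝ) 0).comp
    (PiLp.volume_preserving_ofLp (Fin (m + 1)))

lemma mp_ofXL (m : ℕ) : MeasurePreserving (ofXL m) volume volume := by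
  have h1 := (volume_preserving_piFinSuccAbove (fun _ : Fin (m + 1) => ℝ) 0).symm
  have h2 := (PiLp.volume_preserving_toLp (Fin (m + 1))).comp h1
  have h3 : (ofXL m : ℝ × (Fin m → ℝ) → _)
      = (WithLp.toLp 2) ∘ (MeasurableEquiv.piFinSuccAbove (fun _ : Fin (m + 1) => ℝ) 0).symm := by
    funext p
    ext j; refine Fin.cases ?_ (fun j => ?_) j <;>
    simp [ofXL, MeasurableEquiv.piFinSuccAbove]
  rw [h3]
  exact h2

lemma perm_E {n : ℕ} (hn : 2 ≤ n) {I : Type} [Fintype I] {δ : ℝ} (hδ : 0 < δ)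
    (P Q : I → (Fin n → ℤ)) (hP : Function.Injective P) (hQ : Function.Injective Q) :
    ∃ R : ℝ, ∀ η : ℝ, 0 < η → ∃ S : EuclideanSpace ℝ (Fin n) → EuclideanSpace ℝ (Fin n),
      (∃ K, LipschitzWith K S) ∧ Function.Injective S ∧ MeasurePreserving S volume volume ∧
      (∀ x, dist (S x) x ≤ R) ∧
      ∀ i x, (∀ j, |x j - ctr1 δ (P i j)| ≤ δ / 2 - η) →
        ∀ j, S x j = x j + (ctr1 δ (Q i j) - ctr1 δ (P i j)) := by
  obtain ⟨m, rfl⟩ : ∃ m, n = m + 1 := ⟨n - 1, by omega⟩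
  let F : (Fin (m + 1) → ℤ) → ℤ × (Fin m → ℤ) := fun k => (k 0, fun j => k j.succ)
  have hF : Function.Injective F := by
    intro k l h
    simp only [F, Prod.mk.injEq] at h
    funext j
    refine Fin.cases h.1 (fun j => congrFun h.2 j) j
  obtain ⟨R, hR⟩ := mov_all (by omega) hδ (F ∘ P) (F ∘ Q) (hF.comp hP) (hF.comp hQ)
  have lip1 := (LinearMap.toContinuousLinearMap (toXL m)).lipschitz
  have lip2 := (LinearMap.toContinuousLinearMap (ofXL m)).lipschitz
  simp only [LinearMap.coe_toContinuousLinearMap'] at lip1 lip2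
  refine ⟨‖LinearMap.toContinuousLinearMap (ofXL m)‖₊ * R, fun η hη => ?_⟩
  obtain ⟨S, ⟨K, hK⟩, inj, mp, hd, ht⟩ := hR η hη
  refine ⟨fun x => ofXL m (S (toXL m x)), ⟨_, lip2.comp (hK.comp lip1)⟩, ?_, ?_, ?_, ?_⟩
  · refine Function.Injective.comp (g := ofXL m) ?_ (Function.Injective.comp inj ?_)
    · exact Function.LeftInverse.injective (toXL_ofXL m)
    · exact Function.LeftInverse.injective (ofXL_toXL m)
  · exact (mp_ofXL m).comp (mp.comp (mp_toXL m))
  · intro x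
    have := lip2.dist_le_mul (S (toXL m x)) (toXL m x)
    rw [ofXL_toXL] at this
    exact this.trans (mul_le_mul_of_nonneg_left (hd _) (NNReal.coe_nonneg _))
  · intro i x hx j
    have h0 : 0 ≤ δ / 2 - η := (abs_nonneg _).trans (hx 0)
    have := ht i (toXL m x) (by
      rw [Prod.dist_eq]
      refine max_le (hx 0) ?_
      rw [dist_pi_le_iff h0]
      exact fun j => hx j.succ)
    simp only [this]
    refine Fin.cases ?_ (fun j => ?_) j <;>
    simp [ofXL, toXL, ctrp, ctrm, F]

/-! ### Part 2: area formula -/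

lemma lip_null {n : ℕ} {U N : Set (EuclideanSpace ℝ (Fin n))}
    {u : EuclideanSpace ℝ (Fin n) → EuclideanSpace ℝ (Fin n)} {K : NNReal}
    (hu : LipschitzOnWith K u U) (hN : N ⊆ U) (h0 : volume N = 0) : volume (u '' N) = 0 := by
  have hfin : Module.finrank ℝ (EuclideanSpace ℝ (Fin n)) = n := finrank_euclideanSpace_fin
  have inst : (μH[(n : ℝ)] : Measure (EuclideanSpace ℝ (Fin n))).IsAddHaarMeasure := by
    simpa [hfin] using MeasureTheory.isAddHaarMeasure_hausdorffMeasure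
      (E := EuclideanSpace ℝ (Fin n))
  have ac1 : (μH[(n : ℝ)] : Measure (EuclideanSpace ℝ (Fin n))) ≪ volume :=
    Measure.absolutelyContinuous_isAddHaarMeasure _ _
  have ac2 : (volume : Measure (EuclideanSpace ℝ (Fin n))) ≪ μH[(n : ℝ)] :=
    Measure.absolutelyContinuous_isAddHaarMeasure _ _
  have h1 := (hu.mono hN).hausdorffMeasure_image_le (d := (n : ℝ)) (by positivity)
  rw [ac1 h0, mul_zero] at h1
  exact ac2 (le_antisymm h1 zero_le)

lemma ae_mult {n : ℕ} {U : Set (EuclideanSpace ℝ (Fin n))}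
    {u : EuclideanSpace ℝ (Fin n) → EuclideanSpace ℝ (Fin n)}
    (h : multOn U u = 1) : ∀ᵐ y ∂(volume : Measure (EuclideanSpace ℝ (Fin n))),
      (U ∩ u ⁻¹' {y}).encard ≤ 1 := by
  rw [← h]
  exact ae_le_essSup (f := fun y => (U ∩ u ⁻¹' {y}).encard)

lemma mult_of_inj {n : ℕ} {U : Set (EuclideanSpace ℝ (Fin n))}
    {u : EuclideanSpace ℝ (Fin n) → EuclideanSpace ℝ (Fin n)}
    (h : InjOn u U) (h0 : volume (u '' U) ≠ 0) : multOn U u = 1 := by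
  apply le_antisymm
  · refine essSup_le_of_ae_le _ (Filter.Eventually.of_forall fun y => ?_)
    simp only
    rw [Set.encard_le_one_iff]
    rintro a b ⟨ha, ha'⟩ ⟨hb, hb'⟩
    exact h ha hb (ha'.trans hb'.symm)
  · by_contra hlt
    have h1 : multOn U u = 0 := by
      rw [not_le] at hlt
      exact Order.lt_one_iff.1 hlt
    apply h0
    have h2 : ∀ᵐ y ∂(volume : Measure (EuclideanSpace ℝ (Fin n))),
      (U ∩ u ⁻¹' {y}).encard ≤ 0 := by
      rw [← h1]
      exact ae_le_essSup (f := fun y => (U ∩ u ⁻¹' {y}).encard)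
    rw [← nonpos_iff_eq_zero]
    refine (measure_mono ?_).trans (le_of_eq (ae_iff.1 h2))
    rintro _ ⟨x, hx, rfl⟩
    simp only [nonpos_iff_eq_zero, encard_eq_zero, mem_ofPred_eq]
    exact Set.Nonempty.ne_empty ⟨x, hx, rfl⟩

lemma exists_inj_radius {n : ℕ}
    (A : EuclideanSpace ℝ (Fin n) →L[ℝ] EuclideanSpace ℝ (Fin n)) :
    ∃ r : NNReal, r ≠ 0 ∧ (A.det ≠ 0 → ∀ (f : EuclideanSpace ℝ (Fin n) → EuclideanSpace ℝ (Fin n))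
      (s : Set (EuclideanSpace ℝ (Fin n))), ApproximatesLinearOn f A s r → InjOn f s) := by
  by_cases hA : A.det ≠ 0
  · rcases subsingleton_or_nontrivial (EuclideanSpace ℝ (Fin n)) with hs | hs
    · exact ⟨1, one_ne_zero, fun _ f s _ x _ y _ _ => Subsingleton.elim x y⟩
    · let B := A.toContinuousLinearEquivOfDetNeZero hA
      have hB : ((B : EuclideanSpace ℝ (Fin n) →L[ℝ] EuclideanSpace ℝ (Fin n))) = A := by
        ext x; simp [B]
      have hpos := B.nnnorm_symm_pos
      refine ⟨‖(B.symm : EuclideanSpace ℝ (Fin n) →L[ℝ] EuclideanSpace ℝ (Fin n))‖₊⁻¹ / 2,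
        by positivity, fun _ f s hf => ?_⟩
      rw [← hB] at hf
      refine hf.injOn (Or.inr ?_)
      exact NNReal.half_lt_self (by positivity)
  · exact ⟨1, one_ne_zero, fun h => absurd h hA⟩

lemma measurable_detD {n : ℕ} (u : EuclideanSpace ℝ (Fin n) → EuclideanSpace ℝ (Fin n)) :
    Measurable (detD u) :=
  ContinuousLinearMap.continuous_det.measurable.comp (measurable_fderiv ℝ u)

lemma area {n : ℕ} {U : Set (EuclideanSpace ℝ (Fin n))} (hUo : IsOpen U)
    {u : EuclideanSpace ℝ (Fin n) → EuclideanSpace ℝ (Fin n)} {K : NNReal}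
    (hu : LipschitzOnWith K u U) (hinj : multOn U u = 1) {lam : ℝ} (hlam : 0 < lam)
    (hdet : ∀ᵐ x ∂(volume.restrict U), DifferentiableAt ℝ u x ∧ lam ≤ detD u x)
    {E : Set (EuclideanSpace ℝ (Fin n))} (hE : MeasurableSet E) (hEU : E ⊆ U) :
    ∫⁻ x in E, ENNReal.ofReal (detD u x) = volume (u '' E) := by
  set G : Set (EuclideanSpace ℝ (Fin n)) := {x | DifferentiableAt ℝ u x ∧ lam ≤ detD u x} with hG
  have hGm : MeasurableSet G :=
    (measurableSet_of_differentiableAt ℝ u).inter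
      (measurableSet_le measurable_const (measurable_detD u))
  have hnull : volume (E \ G) = 0 := by
    rw [ae_restrict_iff' hUo.measurableSet, ae_iff] at hdet
    refine measure_mono_null ?_ hdet
    rintro x ⟨hx, hx'⟩ h
    exact hx' (h (hEU hx))
  have hE'm : MeasurableSet (E ∩ G) := hE.inter hGm
  choose r hr0 hr using exists_inj_radius (n := n)
  have hder : ∀ x ∈ E ∩ G, HasFDerivWithinAt u (fderiv ℝ u x) (E ∩ G) x := fun x hx =>
    hx.2.1.hasFDerivAt.hasFDerivWithinAt
  obtain ⟨t, A, tdisj, tmeas, tcov, tapp, tA⟩ :=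
    exists_partition_approximatesLinearOn_of_hasFDerivWithinAt u (E ∩ G) (fderiv ℝ u) hder r hr0
  have hcover : E ∩ G = ⋃ k, (E ∩ G ∩ t k) := by
    rw [← inter_iUnion, inter_eq_left.2 tcov]
  have hinjk : ∀ k, InjOn u (E ∩ G ∩ t k) := by
    intro k
    rcases (E ∩ G).eq_empty_or_nonempty with h | h
    · rw [h]; simp
    · obtain ⟨y, hy, hAy⟩ := tA h k
      refine hr (A k) ?_ u _ (tapp k)
      rw [hAy]
      have : lam ≤ (fderiv ℝ u y).det := hy.2.2
      exact (hlam.trans_le this).ne'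
  have hk : ∀ k, ∫⁻ x in (E ∩ G ∩ t k), ENNReal.ofReal (detD u x)
      = volume (u '' (E ∩ G ∩ t k)) := by
    intro k
    rw [← lintegral_abs_det_fderiv_eq_addHaar_image volume (hE'm.inter (tmeas k))
      (fun x hx => (hder x hx.1).mono inter_subset_left) (hinjk k)]
    refine setLIntegral_congr_fun (hE'm.inter (tmeas k)) fun x hx => ?_
    have h1 : lam ≤ (fderiv ℝ u x).det := hx.1.2.2
    rw [abs_of_pos (hlam.trans_le h1)]
    rfl
  have h1 : ∫⁻ x in E, ENNReal.ofReal (detD u x) = ∫⁻ x in E ∩ G, ENNReal.ofReal (detD u x) := by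
    refine setLIntegral_congr ?_
    refine (ae_eq_set.2 ⟨?_, ?_⟩)
    · simpa using hnull
    · simp [Set.inter_sdiff_assoc]
  have h2 : volume (u '' E) = volume (u '' (E ∩ G)) := by
    apply le_antisymm
    · have : u '' E ⊆ u '' (E ∩ G) ∪ u '' (E \ G) := by
        rw [← image_union, inter_union_sdiff]
      refine (measure_mono this).trans ((measure_union_le _ _).trans ?_)
      rw [lip_null hu (sdiff_subset.trans hEU) hnull, add_zero]
    · exact measure_mono (image_mono inter_subset_left)
  rw [h1, h2]
  have h3 : ∫⁻ x in E ∩ G, ENNReal.ofReal (detD u x)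
      = ∑' k, ∫⁻ x in (E ∩ G ∩ t k), ENNReal.ofReal (detD u x) := by
    conv_lhs => rw [hcover]
    exact lintegral_iUnion (fun k => hE'm.inter (tmeas k))
      (fun i j hij => (tdisj hij).mono inter_subset_right inter_subset_right) _
  have h4 : volume (u '' (E ∩ G)) = ∑' k, volume (u '' (E ∩ G ∩ t k)) := by
    conv_lhs => rw [hcover, image_iUnion]
    refine measure_iUnion₀ ?_ ?_
    · intro i j hij
      have := ae_mult hinj
      rw [ae_iff] at this
      refine measure_mono_null ?_ this
      rintro y ⟨⟨a, ha, rfl⟩, ⟨b, hb, hab⟩⟩ hle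
      rw [Set.encard_le_one_iff] at hle
      have e := hle a b ⟨hEU ha.1.1, rfl⟩ ⟨hEU hb.1.1, hab⟩
      subst e
      exact (Set.disjoint_left.1 (tdisj hij)) ha.2 hb.2
    · intro k
      exact (measurable_image_of_fderivWithin (hE'm.inter (tmeas k))
        (fun x hx => (hder x hx.1).mono inter_subset_left) (hinjk k)).nullMeasurableSet
  rw [h3, h4]
  simp_rw [hk]

lemma area_real {n : ℕ} {U : Set (EuclideanSpace ℝ (Fin n))} (hUo : IsOpen U)
    {u : EuclideanSpace ℝ (Fin n) → EuclideanSpace ℝ (Fin n)} {K : NNReal}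
    (hu : LipschitzOnWith K u U) (hub : IsBounded (u '' U)) (hinj : multOn U u = 1)
    {lam : ℝ} (hlam : 0 < lam)
    (hdet : ∀ᵐ x ∂(volume.restrict U), DifferentiableAt ℝ u x ∧ lam ≤ detD u x) :
    IntegrableOn (detD u) U ∧ ∀ E, MeasurableSet E → E ⊆ U →
      ∫ x in E, detD u x = volume.real (u '' E) := by
  have hpos : ∀ᵐ x ∂(volume.restrict U), 0 ≤ detD u x :=
    hdet.mono fun x hx => hlam.le.trans hx.2
  constructor
  · refine ⟨(measurable_detD u).aestronglyMeasurable, ?_⟩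
    rw [hasFiniteIntegral_iff_ofReal hpos, area hUo hu hinj hlam hdet hUo.measurableSet le_rfl]
    exact hub.measure_lt_top
  · intro E hE hEU
    rw [integral_eq_lintegral_of_nonneg_ae (ae_restrict_of_ae_restrict_of_subset hEU hpos)
      (measurable_detD u).aestronglyMeasurable, area hUo hu hinj hlam hdet hE hEU]
    rfl

/-! ### Part 3: the equality case and dimension one -/

lemma meas_preim {n : ℕ} {U : Set (EuclideanSpace ℝ (Fin n))} (hUo : IsOpen U)
    {u : EuclideanSpace ℝ (Fin n) → EuclideanSpace ℝ (Fin n)} (hu : ContinuousOn u U)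
    {A : Set (EuclideanSpace ℝ (Fin n))} (hA : MeasurableSet A) : MeasurableSet (U ∩ u ⁻¹' A) := by
  have h1 : Measurable (U.domRestrict u) := (continuousOn_iff_continuous_domRestrict.1 hu).measurable
  have h2 := hUo.measurableSet.subtype_image (h1 hA)
  convert h2 using 1
  ext x
  simp [and_comm]

lemma fin_lemma {n : ℕ} {U : Set (EuclideanSpace ℝ (Fin n))} (hne : U.Nonempty) (hUo : IsOpen U)
    (hUb : IsBounded U)
    {S : EuclideanSpace ℝ (Fin n) → EuclideanSpace ℝ (Fin n)} {K : NNReal} (hK : LipschitzWith K S)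
    (hi : Function.Injective S) (hm : MeasurePreserving S volume volume) :
    LipschitzOnWith K S U ∧ IsBounded (S '' U) ∧
      multOn U S = 1 ∧
      (∃ B : Set (EuclideanSpace ℝ (Fin n)), MeasurableSet B ∧
        Measure.map S (volume.restrict U) = volume.restrict B) := by
  have hemb : MeasurableEmbedding S := hK.continuous.measurableEmbedding hi
  refine ⟨hK.lipschitzOnWith, hK.isBounded_image hUb, ?_, S '' U,
    hemb.measurableSet_image.2 hUo.measurableSet, ?_⟩
  · refine mult_of_inj hi.injOn ?_
    rw [← hm.measure_preimage_emb hemb, preimage_image_eq _ hi]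
    exact (hUo.measure_pos volume hne).ne'
  · exact (hm.restrict_image_emb hemb U).map_eq

lemma map_eq_case {n : ℕ} {U : Set (EuclideanSpace ℝ (Fin n))} (hUo : IsOpen U)
    {u : EuclideanSpace ℝ (Fin n) → EuclideanSpace ℝ (Fin n)} {K : NNReal}
    (hu : LipschitzOnWith K u U) (hub : IsBounded (u '' U)) (hinj : multOn U u = 1)
    {lam : ℝ} (hlam : 0 < lam)
    (hdet : ∀ᵐ x ∂(volume.restrict U), DifferentiableAt ℝ u x ∧ lam ≤ detD u x)
    (h1 : ∀ᵐ x ∂(volume.restrict U), detD u x = 1) :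
    ∃ B : Set (EuclideanSpace ℝ (Fin n)), MeasurableSet B ∧
        Measure.map u (volume.restrict U) = volume.restrict B := by
  refine ⟨toMeasurable volume (u '' U), measurableSet_toMeasurable _ _, ?_⟩
  rw [Measure.restrict_toMeasurable hub.measure_lt_top.ne]
  ext A hA
  rw [Measure.map_apply_of_aemeasurable (hu.continuousOn.aemeasurable hUo.measurableSet) hA,
    Measure.restrict_apply' hUo.measurableSet, Measure.restrict_apply hA, inter_comm (u ⁻¹' A),
    inter_comm A, image_inter_preimage u U A |>.symm,
    ← area hUo hu hinj hlam hdet (meas_preim hUo hu.continuousOn hA) inter_subset_left,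
    setLIntegral_congr_fun_ae (g := fun _ => 1) (meas_preim hUo hu.continuousOn hA)]
  · simp
  · have := (ae_restrict_iff' hUo.measurableSet).1 h1
    filter_upwards [this] with x hx hx'
    rw [hx hx'.1, ENNReal.ofReal_one]

lemma vol_bound {n : ℕ} {U : Set (EuclideanSpace ℝ (Fin n))} (hUo : IsOpen U) (hUb : IsBounded U)
    {u : EuclideanSpace ℝ (Fin n) → EuclideanSpace ℝ (Fin n)} {K : NNReal}
    (hu : LipschitzOnWith K u U) (hub : IsBounded (u '' U)) (hinj : multOn U u = 1)
    {lam : ℝ} (hlam : 0 < lam)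
    (hdet : ∀ᵐ x ∂(volume.restrict U), DifferentiableAt ℝ u x ∧ lam ≤ detD u x)
    {E A : Set (EuclideanSpace ℝ (Fin n))} (hE : MeasurableSet E) (hEU : E ⊆ U)
    (hA : u '' E ⊆ A) (hAfin : volume A ≠ ⊤) :
    lam * volume.real E ≤ volume.real A := by
  obtain ⟨hintg, harea⟩ := area_real hUo hu hub hinj hlam hdet
  have h1 : volume.real (u '' E) ≤ volume.real A := measureReal_mono hA hAfin
  rw [← harea E hE hEU] at h1
  refine le_trans ?_ h1
  have hfin : volume E ≠ ⊤ := ((hUb.subset hEU).measure_lt_top).ne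
  have : ∫ x in E, lam = lam * volume.real E := by
    rw [setIntegral_const, smul_eq_mul, mul_comm]
  rw [← this]
  refine integral_mono_ae (integrableOn_const hfin) (hintg.mono_set hEU) ?_
  exact (ae_restrict_of_ae_restrict_of_subset hEU hdet).mono fun x hx => hx.2

lemma mp_coord1 : MeasurePreserving (fun x : EuclideanSpace ℝ (Fin 1) => x 0) volume volume :=
  (volume_preserving_funUnique (Fin 1) ℝ).comp (PiLp.volume_preserving_ofLp (Fin 1))

lemma dist_coord1 (x y : EuclideanSpace ℝ (Fin 1)) : dist x y = |x 0 - y 0| := by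
  rw [EuclideanSpace.dist_eq]
  simp [Real.dist_eq, Real.sqrt_sq_eq_abs]

lemma det_sub_one1 (A : EuclideanSpace ℝ (Fin 1) →ₗ[ℝ] EuclideanSpace ℝ (Fin 1)) :
    LinearMap.det (A - LinearMap.id) = LinearMap.det A - 1 := by
  have b := (EuclideanSpace.basisFun (Fin 1) ℝ).toBasis
  rw [← LinearMap.det_toMatrix b, ← LinearMap.det_toMatrix b A, Matrix.det_fin_one,
    Matrix.det_fin_one, map_sub, LinearMap.toMatrix_id]
  simp

lemma case_one 
    (U : Set (EuclideanSpace ℝ (Fin 1))) (hne : U.Nonempty) (hUo : IsOpen U)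
    (hUb : IsBounded U) (hUc : IsConnected U)
    (u : EuclideanSpace ℝ (Fin 1) → EuclideanSpace ℝ (Fin 1)) (K : NNReal)
    (hu : LipschitzOnWith K u U) (hub : IsBounded (u '' U))
    (hinj : multOn U u = 1)
    (d lam : ℝ)
    (hd : diam (u '' U) ≤ d)
    (hlam : 0 < lam)
    (hdet : ∀ᵐ x ∂(volume.restrict U), DifferentiableAt ℝ u x ∧ lam ≤ detD u x) :
    ∃ (S : EuclideanSpace ℝ (Fin 1) → EuclideanSpace ℝ (Fin 1)) (Ks : NNReal),
      LipschitzOnWith Ks S U ∧ IsBounded (S '' U) ∧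
      multOn U S = 1 ∧
      (∃ B : Set (EuclideanSpace ℝ (Fin 1)), MeasurableSet B ∧
        Measure.map S (volume.restrict U) = volume.restrict B) ∧
      (∫ x in U, ‖u x - S x‖)
        ≤ 10 * (d / lam) * (1 + lam⁻¹) *
          ∫ x in U, |1 - detD u x| := by
  obtain ⟨x1, hx1⟩ := hne
  have hd0 : 0 ≤ d := diam_nonneg.trans hd
  obtain ⟨hintg, harea⟩ := area_real hUo hu hub hinj hlam hdet
  have hUfin : volume U ≠ ⊤ := hUb.measure_lt_top.ne
  have hintJ : IntegrableOn (fun x => |1 - detD u x|) U :=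
    ((integrableOn_const hUfin).sub hintg).abs
  set J := ∫ x in U, |1 - detD u x| with hJ
  have hJ0 : 0 ≤ J := integral_nonneg fun x => abs_nonneg _
  set g : EuclideanSpace ℝ (Fin 1) → EuclideanSpace ℝ (Fin 1) := fun x => u x - x with hg
  have hgL : LipschitzOnWith (K + 1) g U := hu.sub LipschitzWith.id.lipschitzOnWith
  set G : Set (EuclideanSpace ℝ (Fin 1)) := {x | DifferentiableAt ℝ u x} with hG
  have hGm : MeasurableSet G := measurableSet_of_differentiableAt ℝ u
  have hnull : volume (U \ G) = 0 := by
    rw [ae_restrict_iff' hUo.measurableSet, ae_iff] at hdet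
    refine measure_mono_null ?_ hdet
    rintro x ⟨hx, hx'⟩ h
    exact hx' (h hx).1
  have hvol : volume (g '' U) ≤ ENNReal.ofReal J := by
    have hs : g '' U ⊆ g '' (U ∩ G) ∪ g '' (U \ G) := by
      rw [← image_union, inter_union_sdiff]
    refine (measure_mono hs).trans ((measure_union_le _ _).trans ?_)
    rw [lip_null hgL sdiff_subset hnull, add_zero]
    have hder : ∀ x ∈ U ∩ G, HasFDerivWithinAt g
        (fderiv ℝ u x - ContinuousLinearMap.id ℝ _) (U ∩ G) x := fun x hx =>
      ((DifferentiableAt.hasFDerivAt hx.2).sub (hasFDerivAt_id x)).hasFDerivWithinAt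
    refine (addHaar_image_le_lintegral_abs_det_fderiv volume
      (hUo.measurableSet.inter hGm) hder).trans ?_
    have e : ∀ x, |(fderiv ℝ u x - ContinuousLinearMap.id ℝ _).det| = |1 - detD u x| := by
      intro x
      rw [abs_sub_comm 1]
      congr 1
      exact det_sub_one1 _
    simp_rw [e]
    rw [hJ, ofReal_integral_eq_lintegral_ofReal hintJ
      (Filter.Eventually.of_forall fun x => abs_nonneg _)]
    exact lintegral_mono_set inter_subset_left
  have hkey : ∀ x ∈ U, ‖g x - g x1‖ ≤ J := by
    intro x hx
    rw [← dist_eq_norm, dist_coord1]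
    have hpre : IsPreconnected ((fun x : EuclideanSpace ℝ (Fin 1) => x 0) '' (g '' U)) := by
      refine (hUc.isPreconnected.image g hgL.continuousOn).image _ ?_
      fun_prop
    have hoc := hpre.ordConnected
    have hsub := hoc.uIcc_subset (mem_image_of_mem _ (mem_image_of_mem g hx1))
      (mem_image_of_mem _ (mem_image_of_mem g hx))
    have hpre2 : (fun x : EuclideanSpace ℝ (Fin 1) => x 0) ⁻¹' (uIcc (g x1 0) (g x 0))
        ⊆ g '' U := by
      intro y hy
      obtain ⟨z, hz, hzy⟩ := hsub hy
      have : z = y := by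
        ext j
        rw [Subsingleton.elim j 0]
        exact hzy
      exact this ▸ hz
    have h1 := (measure_mono hpre2).trans hvol
    rw [mp_coord1.measure_preimage measurableSet_uIcc.nullMeasurableSet, Real.volume_interval] at h1
    exact (ENNReal.ofReal_le_ofReal_iff hJ0).1 h1
  have hUvol : lam * volume.real U ≤ 2 * d := by
    have hA : u '' U ⊆ (fun x : EuclideanSpace ℝ (Fin 1) => x 0) ⁻¹'
        (Icc (u x1 0 - d) (u x1 0 + d)) := by
      rintro _ ⟨x, hx, rfl⟩
      have := (dist_le_diam_of_mem hub (mem_image_of_mem u hx) (mem_image_of_mem u hx1)).trans hd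
      rw [dist_coord1, abs_le] at this
      constructor <;> simp only <;> linarith [this.1, this.2]
    have hv : volume ((fun x : EuclideanSpace ℝ (Fin 1) => x 0) ⁻¹'
        (Icc (u x1 0 - d) (u x1 0 + d))) = ENNReal.ofReal (2 * d) := by
      rw [mp_coord1.measure_preimage measurableSet_Icc.nullMeasurableSet, Real.volume_Icc]
      congr 1; ring
    have := vol_bound hUo hUb hu hub hinj hlam hdet hUo.measurableSet le_rfl hA (by rw [hv]; exact ENNReal.ofReal_ne_top)
    rwa [show volume.real ((fun x : EuclideanSpace ℝ (Fin 1) => x 0) ⁻¹'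
      (Icc (u x1 0 - d) (u x1 0 + d))) = 2 * d by
        rw [Measure.real, hv, ENNReal.toReal_ofReal (by positivity)]] at this
  have hSL : LipschitzWith 1 (fun x => x + (u x1 - x1)) :=
    LipschitzWith.of_dist_le_mul fun x y => by simp
  obtain ⟨c1, c2, c3, c4⟩ := fin_lemma ⟨x1, hx1⟩ hUo hUb hSL (add_left_injective _)
    (measurePreserving_add_right volume (u x1 - x1))
  refine ⟨_, 1, c1, c2, c3, c4, ?_⟩
  have hbound : ‖∫ x in U, ‖u x - (x + (u x1 - x1))‖‖ ≤ J * volume.real U := by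
    refine norm_setIntegral_le_of_norm_le_const hUb.measure_lt_top fun x hx => ?_
    rw [norm_norm]
    have := hkey x hx
    rwa [show g x - g x1 = u x - (x + (u x1 - x1)) by simp only [hg]; abel] at this
  refine (Real.le_norm_self _).trans (hbound.trans ?_)
  have h2 : volume.real U ≤ 2 * (d / lam) := by
    rw [← mul_div_assoc, le_div_iff₀ hlam]; linarith
  have h3 : 0 ≤ d / lam := by positivity
  have h4 : 0 ≤ lam⁻¹ := by positivity
  rw [mul_comm]
  gcongr
  nlinarith [mul_nonneg h3 h4]

/-! ### Part 4: grids -/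

def idx {n : ℕ} (h : ℝ) (x : EuclideanSpace ℝ (Fin n)) : Fin n → ℤ := fun j => ⌊x j / h⌋

def cell {n : ℕ} (h : ℝ) (z : Fin n → ℤ) : Set (EuclideanSpace ℝ (Fin n)) := {x | idx h x = z}

def ocell {n : ℕ} (h : ℝ) (z : Fin n → ℤ) : Set (EuclideanSpace ℝ (Fin n)) :=
  {x | ∀ j, z j * h < x j ∧ x j < (z j + 1) * h}

lemma mem_cell {n : ℕ} {h : ℝ} (hh : 0 < h) {z : Fin n → ℤ} {x : EuclideanSpace ℝ (Fin n)} :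
    x ∈ cell h z ↔ ∀ j, z j * h ≤ x j ∧ x j < (z j + 1) * h := by
  have : x ∈ cell h z ↔ idx h x = z := Iff.rfl
  rw [this, funext_iff]
  refine forall_congr' fun j => ?_
  rw [idx, Int.floor_eq_iff, le_div_iff₀ hh, div_lt_iff₀ hh]

lemma ocell_subset {n : ℕ} {h : ℝ} (hh : 0 < h) (z : Fin n → ℤ) : ocell h z ⊆ cell h z :=
  fun _ hx => (mem_cell hh).2 fun j => ⟨(hx j).1.le, (hx j).2⟩

lemma isOpen_ocell {n : ℕ} (h : ℝ) (z : Fin n → ℤ) : IsOpen (ocell h z) := by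
  have : ocell h z = ⋂ j, {x : EuclideanSpace ℝ (Fin n) | z j * h < x j ∧ x j < (z j + 1) * h} := by
    ext x; simp [ocell]
  rw [this]
  refine isOpen_iInter_of_finite fun j => ?_
  have hc : Continuous (fun x : EuclideanSpace ℝ (Fin n) => x j) := by fun_prop
  exact (isOpen_lt continuous_const hc).inter (isOpen_lt hc continuous_const)

lemma measurable_idx {n : ℕ} (h : ℝ) : Measurable (idx (n := n) h) := by
  refine measurable_pi_lambda _ fun j => ?_
  refine Int.measurable_floor.comp ?_
  have : Continuous (fun x : EuclideanSpace ℝ (Fin n) => x j / h) := by fun_prop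
  exact this.measurable

lemma measurableSet_cell {n : ℕ} (h : ℝ) (z : Fin n → ℤ) : MeasurableSet (cell h z) :=
  measurable_idx h (measurableSet_singleton z)

lemma vol_cell {n : ℕ} {h : ℝ} (hh : 0 < h) (z : Fin n → ℤ) :
    volume (cell h z) = ENNReal.ofReal (h ^ n) := by
  have : cell h z = (@WithLp.ofLp 2 (Fin n → ℝ)) ⁻¹'
      (Set.pi univ fun j => Ico ((z j : ℝ) * h) ((z j + 1) * h)) := by
    ext x
    rw [mem_cell hh]
    simp
  rw [this, (PiLp.volume_preserving_ofLp (Fin n)).measure_preimage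
    (MeasurableSet.univ_pi fun j => measurableSet_Ico).nullMeasurableSet, Real.volume_pi_Ico]
  have e : ∀ j : Fin n, ((z j : ℝ) + 1) * h - z j * h = h := fun j => by ring
  simp [e, ENNReal.ofReal_pow hh.le]

lemma volr_cell {n : ℕ} {h : ℝ} (hh : 0 < h) (z : Fin n → ℤ) :
    volume.real (cell h z) = h ^ n := by
  rw [Measure.real, vol_cell hh, ENNReal.toReal_ofReal (by positivity)]

lemma dist_of_coord {n : ℕ} {r : ℝ} (hr : 0 ≤ r) {x y : EuclideanSpace ℝ (Fin n)}
    (h : ∀ j, |x j - y j| ≤ r) : dist x y ≤ √n * r := by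
  rw [EuclideanSpace.dist_eq]
  have : ∑ i, dist (x i) (y i) ^ 2 ≤ n * r ^ 2 := by
    calc _ ≤ ∑ i : Fin n, r ^ 2 := Finset.sum_le_sum fun i _ => by
            rw [Real.dist_eq]; exact pow_le_pow_left₀ (abs_nonneg _) (h i) 2
      _ = _ := by simp
  refine (Real.sqrt_le_sqrt this).trans (le_of_eq ?_)
  rw [Real.sqrt_mul (by positivity), Real.sqrt_sq hr]

lemma dist_cell {n : ℕ} {h : ℝ} (hh : 0 < h) {z : Fin n → ℤ} {x y : EuclideanSpace ℝ (Fin n)}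
    (hx : x ∈ cell h z) (hy : y ∈ cell h z) : dist x y ≤ √n * h := by
  rw [mem_cell hh] at hx hy
  refine dist_of_coord hh.le fun j => ?_
  rw [abs_le]
  constructor <;> nlinarith [hx j, hy j]

lemma null_hyper {n : ℕ} (j : Fin n) (c : ℝ) :
    volume {x : EuclideanSpace ℝ (Fin n) | x j = c} = 0 := by
  have h1 : {x : EuclideanSpace ℝ (Fin n) | x j = c} = (@WithLp.ofLp 2 (Fin n → ℝ)) ⁻¹'
      {f | f j = c} := rfl
  have hm : MeasurableSet {f : Fin n → ℝ | f j = c} :=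
    measurableSet_eq_fun (measurable_pi_apply j) measurable_const
  rw [h1, (PiLp.volume_preserving_ofLp (Fin n)).measure_preimage hm.nullMeasurableSet]
  exact Measure.pi_hyperplane (fun _ : Fin n => (volume : Measure ℝ)) j c

lemma null_grid {n : ℕ} {h : ℝ} (hh : 0 < h) :
    volume (⋃ z, ocell (n := n) h z)ᶜ = 0 := by
  refine measure_mono_null (t := ⋃ j : Fin n, ⋃ k : ℤ,
    {x : EuclideanSpace ℝ (Fin n) | x j = k * h}) ?_ ?_
  · intro x hx
    by_contra hne
    simp only [mem_iUnion, mem_ofPred_eq, not_exists] at hne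
    apply hx
    refine mem_iUnion.2 ⟨idx h x, fun j => ?_⟩
    have := (mem_cell hh (z := idx h x) (x := x)).1 rfl j
    exact ⟨lt_of_le_of_ne this.1 (fun e => hne j _ e.symm), this.2⟩
  · exact measure_iUnion_null fun j => measure_iUnion_null fun k => null_hyper j _

lemma cell_disj {n : ℕ} (h : ℝ) : Pairwise (Function.onFun Disjoint (cell (n := n) h)) := by
  intro z w hzw
  rw [Function.onFun, Set.disjoint_left]
  intro x hx hx'
  exact hzw (hx.symm.trans hx')

lemma volr_cells {n : ℕ} {h : ℝ} (hh : 0 < h) (F : Finset (Fin n → ℤ)) :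
    volume.real (⋃ z ∈ F, cell h z) = F.card * h ^ n := by
  rw [measureReal_biUnion_finset (fun z _ w _ hzw => cell_disj h hzw)
    (fun z _ => measurableSet_cell h z) (fun z _ => by rw [vol_cell hh]; exact ENNReal.ofReal_ne_top)]
  simp [volr_cell hh]

lemma vol_cells_ne_top {n : ℕ} {h : ℝ} (hh : 0 < h) (F : Finset (Fin n → ℤ)) :
    volume (⋃ z ∈ F, cell h z) ≠ ⊤ := by
  refine ((measure_biUnion_finset_le F _).trans_lt ?_).ne
  refine ENNReal.sum_lt_top.2 fun z _ => ?_
  rw [vol_cell hh]; exact ENNReal.ofReal_lt_top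

lemma count_le {n : ℕ} {h : ℝ} (hh : 0 < h) {F : Finset (Fin n → ℤ)}
    {A : Set (EuclideanSpace ℝ (Fin n))} (hA : volume A ≠ ⊤) (hF : ∀ z ∈ F, cell h z ⊆ A) :
    F.card * h ^ n ≤ volume.real A := by
  rw [← volr_cells hh]
  exact measureReal_mono (iUnion₂_subset hF) hA

lemma le_count {n : ℕ} {h : ℝ} (hh : 0 < h) {F : Finset (Fin n → ℤ)}
    {A : Set (EuclideanSpace ℝ (Fin n))} (hF : ∀ x ∈ A, idx h x ∈ F) :
    volume.real A ≤ F.card * h ^ n := by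
  rw [← volr_cells hh]
  exact measureReal_mono (fun x hx => mem_iUnion₂.2 ⟨idx h x, hF x hx, rfl⟩) (vol_cells_ne_top hh F)

lemma finite_idx {n : ℕ} {h : ℝ} (hh : 0 < h) {A : Set (EuclideanSpace ℝ (Fin n))}
    (hA : IsBounded A) : (idx h '' A).Finite := by
  obtain ⟨ρ, hρ⟩ := hA.subset_closedBall 0
  refine (Set.finite_Icc (fun _ : Fin n => ⌊-ρ / h⌋) (fun _ : Fin n => ⌊ρ / h⌋)).subset ?_
  rintro _ ⟨x, hx, rfl⟩
  have h1 : ‖x‖ ≤ ρ := by simpa using hρ hx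
  have h2 : ∀ j, |x j| ≤ ρ := fun j => by
    have := PiLp.norm_apply_le x j
    rw [Real.norm_eq_abs] at this
    exact this.trans h1
  constructor <;> intro j <;> refine Int.floor_le_floor ?_ <;> gcongr
  · exact (abs_le.1 (h2 j)).1
  · exact (abs_le.1 (h2 j)).2

def fine {n : ℕ} (M : ℕ) (w : Fin n → ℤ) : Finset (Fin n → ℤ) :=
  Fintype.piFinset fun j => Finset.Ico (w j * M) (w j * M + M)

lemma card_fine {n : ℕ} (M : ℕ) (w : Fin n → ℤ) : (fine M w).card = M ^ n := by
  simp [fine]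

lemma fine_cell {n : ℕ} {h : ℝ} (hh : 0 < h) {M : ℕ} (hM : 0 < M) {w z : Fin n → ℤ}
    (hz : z ∈ fine M w) : cell (h / M) z ⊆ cell h w := by
  intro x hx
  have hM' : (0 : ℝ) < M := by exact_mod_cast hM
  rw [mem_cell (by positivity)] at hx
  rw [mem_cell hh]
  intro j
  have hzj : w j * M ≤ z j ∧ z j < w j * M + M := by
    simpa [fine] using Fintype.mem_piFinset.1 hz j
  have a1 : (w j * M : ℝ) ≤ z j := by exact_mod_cast hzj.1
  have a2 : (z j + 1 : ℝ) ≤ w j * M + M := by exact_mod_cast hzj.2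
  have hk : 0 < h / M := by positivity
  have e : h = M * (h / M) := by field_simp
  constructor
  · calc (w j : ℝ) * h = (w j * M) * (h / M) := by rw [mul_assoc, ← e]
      _ ≤ z j * (h / M) := by gcongr
      _ ≤ x j := (hx j).1
  · calc x j < (z j + 1) * (h / M) := (hx j).2
      _ ≤ (w j * M + M) * (h / M) := by gcongr
      _ = (w j + 1) * (M * (h / M)) := by ring
      _ = (w j + 1) * h := by rw [← e]

/-! ### Part 5: combinatorics -/

lemma fine_unique {n : ℕ} {M : ℕ} {v w z : Fin n → ℤ}
    (h1 : z ∈ fine M v) (h2 : z ∈ fine M w) : v = w := by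
  funext j
  have a : v j * M ≤ z j ∧ z j < v j * M + M := by
    simpa [fine] using Fintype.mem_piFinset.1 h1 j
  have b : w j * M ≤ z j ∧ z j < w j * M + M := by
    simpa [fine] using Fintype.mem_piFinset.1 h2 j
  rcases lt_trichotomy (v j) (w j) with h | h | h
  · nlinarith [show v j + 1 ≤ w j from h]
  · exact h
  · nlinarith [show w j + 1 ≤ v j from h]

lemma extend_inj {α : Type} [DecidableEq α] {s t F : Finset α} (hst : s ⊆ t) {f : α → α}
    (hf : Set.InjOn f s) (hfF : ∀ z ∈ s, f z ∈ F) (hc : t.card ≤ F.card) :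
    ∃ g : α → α, Set.InjOn g t ∧ (∀ z ∈ t, g z ∈ F) ∧ ∀ z ∈ s, g z = f z := by
  have h1 : s.image f ⊆ F := Finset.image_subset_iff.2 hfF
  have h2 : (s.image f).card ≤ t.card := Finset.card_image_le.trans (Finset.card_le_card hst)
  obtain ⟨F', hF1, hF2, hF3⟩ := Finset.exists_subsuperset_card_eq h1 h2 hc
  obtain ⟨g, hg⟩ := Finset.exists_equiv_extend_of_card_eq (α := t) (β := α) (t := F')
    (by simp [hF3]) (s := Finset.univ.filter fun z : t => (z : α) ∈ s) (f := fun z => f z)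
    (by
      intro y hy
      simp only [Finset.mem_image, Finset.mem_filter, Finset.mem_univ, true_and] at hy
      obtain ⟨z, hz, rfl⟩ := hy
      exact hF1 (Finset.mem_image_of_mem f hz))
    (by
      intro a ha b hb hab
      simp only [Finset.coe_filter, Finset.mem_univ, true_and, mem_ofPred_eq] at ha hb
      exact Subtype.ext (hf ha hb hab))
  refine ⟨fun z => if h : z ∈ t then (g ⟨z, h⟩ : α) else z, ?_, ?_, ?_⟩
  · intro a ha b hb hab
    have ha' : a ∈ t := ha
    have hb' : b ∈ t := hb
    simp only [ha', hb', dif_pos] at hab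
    have := g.injective (Subtype.ext hab)
    exact congrArg Subtype.val this
  · intro z hz
    simp only [hz, dif_pos]
    exact hF2 (g _).2
  · intro z hz
    simp only [hst hz, dif_pos]
    exact hg ⟨z, hst hz⟩ (by simpa using hz)

lemma assign {n : ℕ} (M : ℕ) (G : Finset (Fin n → ℤ)) (w : (Fin n → ℤ) → (Fin n → ℤ)) :
    ∃ (G' : Finset (Fin n → ℤ)) (q : (Fin n → ℤ) → (Fin n → ℤ)), G' ⊆ G ∧ Set.InjOn q G' ∧
      (∀ z ∈ G', q z ∈ fine M (w z)) ∧
      (G \ G').card ≤ ∑ v ∈ G.image w, ((G.filter fun z => w z = v).card - M ^ n) := by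
  classical
  have key : ∀ v, ∃ (H : Finset (Fin n → ℤ)) (f : (Fin n → ℤ) → (Fin n → ℤ)),
      H ⊆ G.filter (fun z => w z = v) ∧ Set.InjOn f H ∧ (∀ z ∈ H, f z ∈ fine M v) ∧
      ((G.filter fun z => w z = v) \ H).card = (G.filter fun z => w z = v).card - M ^ n := by
    intro v
    obtain ⟨H, hH, hHc⟩ := Finset.exists_subset_card_eq
      (s := G.filter fun z => w z = v) (n := min (G.filter fun z => w z = v).card (M ^ n))
      (min_le_left _ _)
    have hle : H.card ≤ (fine M v).card := by
      rw [hHc, card_fine]; exact min_le_right _ _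
    obtain ⟨g, hg1, hg2, -⟩ := extend_inj (Finset.empty_subset H) (F := fine M v) (f := id)
      (by simp) (by simp) hle
    refine ⟨H, g, hH, hg1, hg2, ?_⟩
    rw [Finset.card_sdiff_of_subset hH, hHc]
    omega
  choose H f hH hinj hf hcard using key
  refine ⟨G.filter fun z => z ∈ H (w z), fun z => f (w z) z, Finset.filter_subset _ _, ?_, ?_, ?_⟩
  · intro a ha b hb hab
    simp only [Finset.coe_filter, mem_ofPred_eq] at ha hb
    simp only at hab
    have h1 := hf _ a ha.2
    have h2 := hf _ b hb.2
    rw [hab] at h1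
    have e := fine_unique h1 h2
    rw [e] at hab
    exact hinj (w b) (by rw [← e]; exact ha.2) hb.2 hab
  · intro z hz
    exact hf _ z (Finset.mem_filter.1 hz).2
  · rw [Finset.card_eq_sum_card_fiberwise (f := w) (t := G.image w)]
    · refine Finset.sum_le_sum fun v _ => ?_
      rw [← hcard v]
      refine Finset.card_le_card ?_
      intro z hz
      simp only [Finset.mem_filter, Finset.mem_sdiff] at hz ⊢
      refine ⟨⟨hz.1.1, hz.2⟩, fun h => hz.1.2 ⟨hz.1.1, ?_⟩⟩
      rw [hz.2]; exact h
    · intro z hz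
      have : z ∈ G := (Finset.mem_sdiff.1 hz).1
      exact Finset.mem_coe.2 (Finset.mem_image_of_mem w this)

/-! ### Part 6: the main approximation -/

lemma compact_step {n : ℕ} {ι : Type*} {U : Set (EuclideanSpace ℝ (Fin n))} (hUo : IsOpen U)
    (hUb : IsBounded U) (W : ι → Set (EuclideanSpace ℝ (Fin n))) (hW : ∀ i, IsOpen (W i))
    (hnull : volume (U \ ⋃ i, W i) = 0) {ε : ℝ} (hε : 0 < ε) :
    ∃ K1 : Set (EuclideanSpace ℝ (Fin n)), MeasurableSet K1 ∧ K1 ⊆ U ∧ volume.real (U \ K1) ≤ ε ∧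
      ∃ r > 0, ∀ x ∈ K1, ∃ i, ball x r ⊆ W i := by
  have hWo : IsOpen (⋃ i, W i) := isOpen_iUnion hW
  have hm : MeasurableSet (U ∩ ⋃ i, W i) := (hUo.inter hWo).measurableSet
  have hfin : volume (U ∩ ⋃ i, W i) ≠ ⊤ := ((hUb.subset inter_subset_left).measure_lt_top).ne
  obtain ⟨K1, hK1, hK1c, hlt⟩ := hm.exists_isCompact_sdiff_lt hfin (ε := ENNReal.ofReal ε)
    (by simpa using hε)
  refine ⟨K1, hK1c.measurableSet, hK1.trans inter_subset_left, ?_, ?_⟩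
  · refine ENNReal.toReal_le_of_le_ofReal hε.le ?_
    calc volume (U \ K1) ≤ volume (((U ∩ ⋃ i, W i) \ K1) ∪ (U \ ⋃ i, W i)) := by
          refine measure_mono fun x hx => ?_
          by_cases h : x ∈ ⋃ i, W i
          · exact Or.inl ⟨⟨hx.1, h⟩, hx.2⟩
          · exact Or.inr ⟨hx.1, h⟩
      _ ≤ volume ((U ∩ ⋃ i, W i) \ K1) + volume (U \ ⋃ i, W i) := measure_union_le _ _
      _ ≤ _ := by rw [hnull, add_zero]; exact hlt.le
  · exact lebesgue_number_lemma_of_metric hK1c hW (hK1.trans inter_subset_right)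

lemma cell_nonempty {n : ℕ} {h : ℝ} (hh : 0 < h) (z : Fin n → ℤ) : (cell h z).Nonempty := by
  apply nonempty_of_measure_ne_zero (μ := volume)
  rw [vol_cell hh]
  simp; positivity

lemma excess {n : ℕ} {U : Set (EuclideanSpace ℝ (Fin n))} (hUo : IsOpen U) (hUb : IsBounded U)
    {u : EuclideanSpace ℝ (Fin n) → EuclideanSpace ℝ (Fin n)} {K : NNReal}
    (hu : LipschitzOnWith K u U) (hub : IsBounded (u '' U)) (hinj : multOn U u = 1)
    {lam : ℝ} (hlam : 0 < lam)
    (hdet : ∀ᵐ x ∂(volume.restrict U), DifferentiableAt ℝ u x ∧ lam ≤ detD u x)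
    {Δ : ℝ} (hΔ : 0 < Δ) {M : ℕ} (hM : 0 < M) (G : Finset (Fin n → ℤ))
    (wf : (Fin n → ℤ) → (Fin n → ℤ))
    (hG : ∀ z ∈ G, cell (Δ / M) z ⊆ U ∧ ∀ x ∈ cell (Δ / M) z, u x ∈ cell Δ (wf z)) :
    ((∑ v ∈ G.image wf, ((G.filter fun z => wf z = v).card - M ^ n) : ℕ) : ℝ) * (Δ / M) ^ n
      ≤ ∫ x in U, max (1 - detD u x) 0 := by
  classical
  obtain ⟨hintg, harea⟩ := area_real hUo hu hub hinj hlam hdet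
  have hUfin : volume U ≠ ⊤ := hUb.measure_lt_top.ne
  have hM' : (0 : ℝ) < M := by exact_mod_cast hM
  have hδ : 0 < Δ / M := by positivity
  have i1 : IntegrableOn (fun x => 1 - detD u x) U :=
    (integrableOn_const hUfin).sub hintg
  have i2 : IntegrableOn (fun x => max (1 - detD u x) 0) U := i1.pos_part
  set E : (Fin n → ℤ) → Set (EuclideanSpace ℝ (Fin n)) := fun v => U ∩ u ⁻¹' (cell Δ v) with hE
  have hEm : ∀ v, MeasurableSet (E v) := fun v =>
    meas_preim hUo hu.continuousOn (measurableSet_cell Δ v)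
  have hEU : ∀ v, E v ⊆ U := fun v => inter_subset_left
  have key : ∀ v, (((G.filter fun z => wf z = v).card - M ^ n : ℕ) : ℝ) * (Δ / M) ^ n
      ≤ ∫ x in E v, max (1 - detD u x) 0 := by
    intro v
    have h0 : 0 ≤ ∫ x in E v, max (1 - detD u x) 0 :=
      integral_nonneg fun x => le_max_right _ _
    rcases le_total ((G.filter fun z => wf z = v).card) (M ^ n) with h | h
    · rw [Nat.sub_eq_zero_of_le h]; simpa using h0
    · rw [Nat.cast_sub h, sub_mul]
      have hEfin : volume (E v) ≠ ⊤ := ((hUb.subset (hEU v)).measure_lt_top).ne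
      have a1 : ((G.filter fun z => wf z = v).card : ℝ) * (Δ / M) ^ n ≤ volume.real (E v) := by
        refine count_le hδ hEfin fun z hz => ?_
        obtain ⟨hz1, rfl⟩ := Finset.mem_filter.1 hz
        exact fun x hx => ⟨(hG z hz1).1 hx, (hG z hz1).2 x hx⟩
      have a2 : ((M ^ n : ℕ) : ℝ) * (Δ / M) ^ n = Δ ^ n := by
        push_cast; rw [← mul_pow]; congr 1; field_simp
      have a3 : ∫ x in E v, detD u x ≤ Δ ^ n := by
        rw [harea _ (hEm v) (hEU v), ← volr_cell hΔ v]
        refine measureReal_mono ?_ (by rw [vol_cell hΔ]; exact ENNReal.ofReal_ne_top)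
        rintro _ ⟨x, hx, rfl⟩
        exact hx.2
      have a4 : ∫ x in E v, (1 - detD u x) ≤ ∫ x in E v, max (1 - detD u x) 0 :=
        integral_mono (i1.mono_set (hEU v)) (i2.mono_set (hEU v)) fun x => le_max_left _ _
      have ic : IntegrableOn (fun _ : EuclideanSpace ℝ (Fin n) => (1 : ℝ)) (E v) :=
        integrableOn_const hEfin
      rw [integral_sub ic (hintg.mono_set (hEU v))] at a4
      simp at a4
      linarith
  push_cast
  rw [Finset.sum_mul]
  calc _ ≤ ∑ v ∈ G.image wf, ∫ x in E v, max (1 - detD u x) 0 :=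
        Finset.sum_le_sum fun v _ => by exact_mod_cast key v
    _ = ∫ x in ⋃ v ∈ G.image wf, E v, max (1 - detD u x) 0 := by
        rw [integral_biUnion_finset _ (fun v _ => hEm v)]
        · intro v _ w _ hvw
          exact ((cell_disj Δ hvw).preimage u).mono inter_subset_right inter_subset_right
        · exact fun v _ => i2.mono_set (hEU v)
    _ ≤ _ := by
        refine setIntegral_mono_set i2 (ae_of_all _ fun x => le_max_right _ _) ?_
        exact (iUnion₂_subset fun v _ => hEU v).eventuallyLE

lemma coord_of_ball {n : ℕ} {δ r : ℝ} (hr : 0 < r) {x : EuclideanSpace ℝ (Fin n)}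
    {z : Fin n → ℤ} (h : ball x r ⊆ ocell δ z) (j : Fin n) :
    |x j - ctr1 δ (z j)| ≤ δ / 2 - r / 2 := by
  have h1 : x + EuclideanSpace.single j (r / 2) ∈ ball x r := by
    rw [mem_ball, dist_eq_norm]; simp [abs_of_pos hr]; linarith
  have h2 : x - EuclideanSpace.single j (r / 2) ∈ ball x r := by
    rw [mem_ball, dist_eq_norm]; simp [abs_of_pos hr]; linarith
  have a := (h h1 j).2
  have b := (h h2 j).1
  simp at a b
  unfold ctr1
  rw [abs_le]
  constructor <;> linarith

lemma integral_four {α : Type*} [MeasurableSpace α] {μ : Measure α} {U : Set α}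
    (hU : MeasurableSet U) (hfin : μ U ≠ ⊤) {f : α → ℝ} (hf0 : ∀ x, 0 ≤ f x)
    {A B D : Set α} (hA : MeasurableSet A) (hB : MeasurableSet B) (hD : MeasurableSet D)
    {k a b c va vb vd : ℝ} (ha0 : 0 ≤ a) (hb0 : 0 ≤ b) (hc0 : 0 ≤ c)
    (hva : μ.real (U ∩ A) ≤ va) (hvb : μ.real (U ∩ B) ≤ vb) (hvd : μ.real (U ∩ D) ≤ vd)
    (h : ∀ x ∈ U, f x ≤ k + A.indicator (fun _ => a) x + B.indicator (fun _ => b) x +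
      D.indicator (fun _ => c) x) :
    ∫ x in U, f x ∂μ ≤ k * μ.real U + a * va + b * vb + c * vd := by
  have : IsFiniteMeasure (μ.restrict U) := ⟨by simpa using hfin.lt_top⟩
  have iA : Integrable (A.indicator (fun _ => a)) (μ.restrict U) :=
    (integrable_const a).indicator hA
  have iB : Integrable (B.indicator (fun _ => b)) (μ.restrict U) :=
    (integrable_const b).indicator hB
  have iD : Integrable (D.indicator (fun _ => c)) (μ.restrict U) :=
    (integrable_const c).indicator hD
  have ik : Integrable (fun _ : α => k) (μ.restrict U) := integrable_const k
  have h1 := integral_mono_of_nonneg (μ := μ.restrict U) (f := f) (ae_of_all _ hf0)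
    (((ik.add iA).add iB).add iD) ((ae_restrict_iff' hU).2 (ae_of_all _ h))
  refine h1.trans ?_
  have e1 := integral_add' ((ik.add iA).add iB) iD
  have e2 := integral_add' (ik.add iA) iB
  have e3 := integral_add' ik iA
  rw [e1, e2, e3, integral_indicator_const _ hA, integral_indicator_const _ hB,
    integral_indicator_const _ hD]
  simp only [integral_const, smul_eq_mul, measureReal_restrict_apply hA,
    measureReal_restrict_apply hB, measureReal_restrict_apply hD,
    measureReal_restrict_apply MeasurableSet.univ, univ_inter]
  rw [inter_comm A, inter_comm B, inter_comm D, mul_comm a, mul_comm b, mul_comm c, mul_comm k]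
  gcongr

lemma approx {n : ℕ} (hn : 2 ≤ n) {U : Set (EuclideanSpace ℝ (Fin n))} (hUo : IsOpen U)
    (hUb : IsBounded U)
    {u : EuclideanSpace ℝ (Fin n) → EuclideanSpace ℝ (Fin n)} {K : NNReal}
    (hu : LipschitzOnWith K u U) (hub : IsBounded (u '' U)) (hinj : multOn U u = 1)
    {d lam : ℝ} (hd : diam (u '' U) ≤ d) (hlam : 0 < lam)
    (hdet : ∀ᵐ x ∂(volume.restrict U), DifferentiableAt ℝ u x ∧ lam ≤ detD u x)
    {x0 : EuclideanSpace ℝ (Fin n)} (hx0 : x0 ∈ U) {Rm : ℝ} (hRm : d ≤ Rm)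
    (hvol : volume.real U ≤ volume.real (closedBall (u x0) Rm)) {ε : ℝ} (hε : 0 < ε) :
    ∃ (S : EuclideanSpace ℝ (Fin n) → EuclideanSpace ℝ (Fin n)) (Ks : NNReal),
      LipschitzWith Ks S ∧ Function.Injective S ∧ MeasurePreserving S volume volume ∧
      ∫ x in U, ‖u x - S x‖ ≤ (d + Rm) * (∫ x in U, max (1 - detD u x) 0) + ε := by
  classical
  set m := ∫ x in U, max (1 - detD u x) 0 with hm
  have hm0 : 0 ≤ m := integral_nonneg fun x => le_max_right _ _
  set y0 := u x0 with hy0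
  have hd0 : 0 ≤ d := diam_nonneg.trans hd
  have huy : ∀ x ∈ U, dist (u x) y0 ≤ d := fun x hx =>
    (dist_le_diam_of_mem hub (mem_image_of_mem u hx) (mem_image_of_mem u hx0)).trans hd
  have hUfin : volume U ≠ ⊤ := hUb.measure_lt_top.ne
  obtain ⟨ρ, hρ⟩ := hUb.subset_closedBall y0
  have hρ' : ∀ x ∈ U, dist x y0 ≤ ρ := fun x hx => hρ hx
  have hρ0 : 0 ≤ ρ := dist_nonneg.trans (hρ' x0 hx0)
  set V := volume.real U with hV
  have hV0 : 0 ≤ V := measureReal_nonneg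
  have hn0 : (0 : ℝ) < n := by exact_mod_cast (by omega : 0 < n)
  have hsn : 0 < √(n : ℝ) := Real.sqrt_pos.2 hn0
  -- coarse scale
  obtain ⟨Δ, hΔ, hΔε⟩ : ∃ Δ > 0, √n * Δ * (V + 2 * m) ≤ ε / 3 := by
    refine ⟨ε / 3 / (√n * (V + 2 * m + 1)), by positivity, ?_⟩
    have : √n * (ε / 3 / (√n * (V + 2 * m + 1))) * (V + 2 * m)
        = (ε / 3) * ((V + 2 * m) / (V + 2 * m + 1)) := by
      field_simp
    rw [this]
    refine mul_le_of_le_one_right (by positivity) ?_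
    rw [div_le_one (by positivity)]
    linarith
  set C := d + Rm + 2 * (√n * Δ) + ρ with hC
  have hRm0 : 0 ≤ Rm := hd0.trans hRm
  have hsΔ : 0 < √n * Δ := by positivity
  have hC0 : 0 ≤ C := by positivity
  -- first compact set
  have hnull : volume (U \ ⋃ w, (U ∩ u ⁻¹' (ocell Δ w))) = 0 := by
    have hOo : IsOpen (⋃ z, ocell (n := n) Δ z) := isOpen_iUnion fun z => isOpen_ocell Δ z
    have e : U \ ⋃ w, (U ∩ u ⁻¹' (ocell Δ w)) = U ∩ u ⁻¹' ((⋃ z, ocell (n := n) Δ z)ᶜ) := by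
      ext x
      simp only [mem_sdiff, mem_iUnion, mem_inter_iff, mem_preimage, mem_compl_iff, not_exists,
        not_and]
      exact ⟨fun h => ⟨h.1, fun w => h.2 w h.1⟩, fun h => ⟨h.1, fun w _ => h.2 w⟩⟩
    rw [e]
    have hEm := meas_preim hUo hu.continuousOn hOo.measurableSet.compl
    have := vol_bound hUo hUb hu hub hinj hlam hdet hEm inter_subset_left
      (A := (⋃ z, ocell (n := n) Δ z)ᶜ) (by rintro _ ⟨x, hx, rfl⟩; exact hx.2)
      (by rw [null_grid hΔ]; simp)
    rw [measureReal_def volume (⋃ z, ocell (n := n) Δ z)ᶜ, null_grid hΔ, ENNReal.toReal_zero] at this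
    have h2 : volume.real (U ∩ u ⁻¹' ((⋃ z, ocell (n := n) Δ z)ᶜ)) = 0 :=
      le_antisymm (by nlinarith) measureReal_nonneg
    rwa [measureReal_eq_zero_iff ((hUb.subset inter_subset_left).measure_lt_top).ne] at h2
  obtain ⟨K1, hK1m, hK1U, hK1v, r, hr, hK1r⟩ := compact_step hUo hUb
    (fun w => U ∩ u ⁻¹' (ocell Δ w))
    (fun w => hu.continuousOn.isOpen_inter_preimage hUo (isOpen_ocell Δ w)) hnull
    (ε := ε / (3 * (C + 1))) (by positivity)
  -- fine scale
  obtain ⟨M, hM, hMr⟩ : ∃ M : ℕ, 0 < M ∧ √n * (Δ / M) < r := by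
    obtain ⟨M, hM⟩ := exists_nat_gt (√n * Δ / r)
    have h0 : (0 : ℝ) < M := lt_of_le_of_lt (by positivity) hM
    refine ⟨M, by exact_mod_cast h0, ?_⟩
    rw [div_lt_iff₀ hr] at hM
    rw [← mul_div_assoc, div_lt_iff₀ h0]
    linarith
  have hM' : (1 : ℝ) ≤ M := by exact_mod_cast hM
  set δ := Δ / M with hδdef
  have hδ : 0 < δ := by positivity
  have hδΔ : δ ≤ Δ := div_le_self hΔ.le hM'
  have hsδ : √n * δ ≤ √n * Δ := by gcongr
  set I := (finite_idx hδ hUb).toFinset with hI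
  have hImem : ∀ x ∈ U, idx δ x ∈ I := fun x hx => by
    rw [hI, Set.Finite.mem_toFinset]; exact mem_image_of_mem _ hx
  set G := I.filter (fun z => cell δ z ⊆ U ∧ ∃ w, ∀ x ∈ cell δ z, u x ∈ cell Δ w) with hG
  have hwf : ∀ z, ∃ w, z ∈ G → ∀ x ∈ cell δ z, u x ∈ cell Δ w := by
    intro z
    by_cases hz : z ∈ G
    · obtain ⟨w, hw⟩ := (Finset.mem_filter.1 hz).2.2
      exact ⟨w, fun _ => hw⟩
    · exact ⟨0, fun h => absurd h hz⟩
  choose wf hwf using hwf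
  have hGU : ∀ z ∈ G, cell δ z ⊆ U := fun z hz => (Finset.mem_filter.1 hz).2.1
  have hGI : G ⊆ I := Finset.filter_subset _ _
  have hBb : IsBounded (closedBall y0 (Rm + √n * Δ)) := isBounded_closedBall
  set FR := (finite_idx hδ hBb).toFinset with hFR
  obtain ⟨G', q0, hG'G, hq0i, hq0f, hcard⟩ := assign M G wf
  have hq0F : ∀ z ∈ G', q0 z ∈ FR := by
    intro z hz
    obtain ⟨p, hp⟩ := cell_nonempty hδ (q0 z)
    obtain ⟨x, hx⟩ := cell_nonempty hδ z
    rw [hFR, Set.Finite.mem_toFinset]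
    refine ⟨p, ?_, hp⟩
    have h1 := dist_cell hΔ (fine_cell hΔ hM (hq0f z hz) hp) (hwf z (hG'G hz) x hx)
    have h2 := huy x (hGU z (hG'G hz) hx)
    rw [mem_closedBall]
    linarith [dist_triangle p (u x) y0]
  have hcFR : G.card ≤ FR.card := by
    have h1 := count_le hδ hUfin hGU
    have h2 : volume.real (closedBall y0 Rm) ≤ volume.real (closedBall y0 (Rm + √n * Δ)) :=
      measureReal_mono (closedBall_subset_closedBall (by linarith)) hBb.measure_lt_top.ne
    have h3 : volume.real (closedBall y0 (Rm + √n * Δ)) ≤ FR.card * δ ^ n :=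
      le_count hδ fun x hx => by
        rw [hFR, Set.Finite.mem_toFinset]; exact mem_image_of_mem _ hx
    have h4 : (G.card : ℝ) * δ ^ n ≤ FR.card * δ ^ n := by linarith
    exact_mod_cast le_of_mul_le_mul_right h4 (by positivity)
  obtain ⟨q1, hq1i, hq1F, hq1e⟩ := extend_inj hG'G hq0i hq0F hcFR
  obtain ⟨q, hqi, hqF, hqe⟩ := extend_inj (F := FR ∪ I) hGI hq1i
    (fun z hz => Finset.mem_union_left _ (hq1F z hz))
    (Finset.card_le_card Finset.subset_union_right)
  obtain ⟨R, hR⟩ := perm_E hn hδ (I := I) (fun z => (z : Fin n → ℤ)) (fun z => q z)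
    Subtype.val_injective (fun a b hab => Subtype.ext (hqi a.2 b.2 hab))
  -- second compact set
  set D := d + ρ + |R| with hD
  have hD0 : 0 ≤ D := by positivity
  obtain ⟨K2, hK2m, hK2U, hK2v, r2, hr2, hK2r⟩ := compact_step hUo hUb
    (fun z => ocell δ z) (fun z => isOpen_ocell δ z)
    (measure_mono_null (fun x hx => hx.2) (null_grid hδ))
    (ε := ε / (3 * (D + 1))) (by positivity)
  obtain ⟨S, ⟨Ks, hKs⟩, hSi, hSm, hSR, hSq⟩ := hR (r2 / 2) (by positivity)
  refine ⟨S, Ks, hKs, hSi, hSm, ?_⟩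
  have hSK2 : ∀ x ∈ K2, S x ∈ cell δ (q (idx δ x)) := by
    intro x hx
    obtain ⟨z, hz⟩ := hK2r x hx
    have hxz : idx δ x = z := ocell_subset hδ z (hz (mem_ball_self hr2))
    have hzI : z ∈ I := hxz ▸ hImem x (hK2U hx)
    have hc := fun j => coord_of_ball hr2 hz j
    have hs := hSq ⟨z, hzI⟩ x hc
    rw [hxz, mem_cell hδ]
    intro j
    rw [hs j]
    have := abs_le.1 (hc j)
    simp only [ctr1] at this ⊢
    constructor <;> linarith [this.1, this.2]
  set Bad := ⋃ z ∈ G \ G', cell δ z with hBad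
  have hBadm : MeasurableSet Bad :=
    Finset.measurableSet_biUnion _ fun z _ => measurableSet_cell δ z
  have hBadv : volume.real (U ∩ Bad) ≤ m := by
    calc volume.real (U ∩ Bad) ≤ volume.real Bad :=
          measureReal_mono inter_subset_right (vol_cells_ne_top hδ _)
      _ = (G \ G').card * δ ^ n := volr_cells hδ _
      _ ≤ ((∑ v ∈ G.image wf, ((G.filter fun z => wf z = v).card - M ^ n) : ℕ) : ℝ) * δ ^ n := by
          gcongr
      _ ≤ m := excess hUo hUb hu hub hinj hlam hdet hΔ hM G wf
          fun z hz => ⟨hGU z hz, hwf z hz⟩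
  have hFRd : ∀ z ∈ FR, ∀ p ∈ cell δ z, dist p y0 ≤ Rm + 2 * (√n * Δ) := by
    intro z hz p hp
    rw [hFR, Set.Finite.mem_toFinset] at hz
    obtain ⟨p', hp', hpz⟩ := hz
    have h1 := dist_cell hδ hp hpz
    rw [mem_closedBall] at hp'
    linarith [dist_triangle p p' y0]
  have hId : ∀ z ∈ I, ∀ p ∈ cell δ z, dist p y0 ≤ ρ + √n * Δ := by
    intro z hz p hp
    rw [hI, Set.Finite.mem_toFinset] at hz
    obtain ⟨p', hp', hpz⟩ := hz
    have h1 := dist_cell hδ hp hpz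
    linarith [dist_triangle p p' y0, hρ' p' hp']
  have hpt : ∀ x ∈ U, ‖u x - S x‖ ≤ √n * Δ + Bad.indicator (fun _ => d + Rm + 2 * (√n * Δ)) x
      + (K1ᶜ).indicator (fun _ => C) x + (K2ᶜ).indicator (fun _ => D) x := by
    intro x hx
    rw [← dist_eq_norm]
    have n1 : 0 ≤ Bad.indicator (fun _ => d + Rm + 2 * (√n * Δ)) x :=
      indicator_nonneg (fun _ _ => by positivity) _
    have n2 : 0 ≤ (K1ᶜ).indicator (fun _ => C) x := indicator_nonneg (fun _ _ => hC0) _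
    have n3 : 0 ≤ (K2ᶜ).indicator (fun _ => D) x := indicator_nonneg (fun _ _ => hD0) _
    by_cases h2 : x ∈ K2
    swap
    · have : (K2ᶜ).indicator (fun _ => D) x = D := indicator_of_mem h2 _
      have h3 := hSR x
      rw [dist_comm] at h3
      have h4 := hρ' x hx
      rw [dist_comm] at h4
      linarith [dist_triangle4 (u x) y0 x (S x), huy x hx, le_abs_self R]
    have hS2 := hSK2 x h2
    set z := idx δ x with hz
    have hxz : x ∈ cell δ z := rfl
    have hzI : z ∈ I := hImem x hx
    by_cases h1 : x ∈ K1
    swap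
    · have e : (K1ᶜ).indicator (fun _ => C) x = C := indicator_of_mem h1 _
      have : dist (S x) y0 ≤ Rm + 2 * (√n * Δ) + ρ := by
        rcases Finset.mem_union.1 (hqF z hzI) with h | h
        · linarith [hFRd _ h _ hS2]
        · linarith [hId _ h _ hS2]
      rw [dist_comm] at this
      linarith [dist_triangle (u x) y0 (S x), huy x hx]
    obtain ⟨w, hw⟩ := hK1r x h1
    have hcw : ∀ y ∈ cell δ z, y ∈ U ∩ u ⁻¹' (ocell Δ w) := fun y hy =>
      hw (mem_ball.2 ((dist_cell hδ hy hxz).trans_lt hMr))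
    have hzG : z ∈ G := Finset.mem_filter.2 ⟨hzI, fun y hy => (hcw y hy).1,
      w, fun y hy => ocell_subset hΔ w (hcw y hy).2⟩
    have hux := hwf z hzG x hxz
    by_cases h3 : z ∈ G'
    · rw [hqe z hzG, hq1e z h3] at hS2
      have := dist_cell hΔ hux (fine_cell hΔ hM (hq0f z h3) hS2)
      linarith
    · have hxB : x ∈ Bad := mem_iUnion₂.2 ⟨z, Finset.mem_sdiff.2 ⟨hzG, h3⟩, hxz⟩
      have e : Bad.indicator (fun _ => d + Rm + 2 * (√n * Δ)) x = d + Rm + 2 * (√n * Δ) :=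
        indicator_of_mem hxB _
      rw [hqe z hzG] at hS2
      have := hFRd _ (hq1F z hzG) _ hS2
      rw [dist_comm] at this
      linarith [dist_triangle (u x) y0 (S x), huy x hx]
  have hK1v' : volume.real (U ∩ K1ᶜ) ≤ ε / (3 * (C + 1)) := hK1v
  have hK2v' : volume.real (U ∩ K2ᶜ) ≤ ε / (3 * (D + 1)) := hK2v
  have hfinal := integral_four hUo.measurableSet hUfin (fun x => norm_nonneg (u x - S x)) hBadm
    hK1m.compl hK2m.compl (by positivity) hC0 hD0 hBadv
    hK1v' hK2v' hpt
  have f1 : ∀ t : ℝ, 0 ≤ t → t * (ε / (3 * (t + 1))) ≤ ε / 3 := by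
    intro t ht
    have : t * (ε / (3 * (t + 1))) = ε / 3 * (t / (t + 1)) := by field_simp
    rw [this]
    refine mul_le_of_le_one_right (by positivity) ?_
    rw [div_le_one (by positivity)]
    linarith
  have := f1 C hC0
  have := f1 D hD0
  rw [← hV] at hfinal
  nlinarith

theorem stmt_5 (n : ℕ) (hn : 1 ≤ n)
    (U : Set (EuclideanSpace ℝ (Fin n))) (hne : U.Nonempty) (hUo : IsOpen U)
    (hUb : IsBounded U) (hUc : IsConnected U)
    (u : EuclideanSpace ℝ (Fin n) → EuclideanSpace ℝ (Fin n)) (K : NNReal)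
    (hu : LipschitzOnWith K u U) (hub : IsBounded (u '' U))
    (hinj : multOn U u = 1)
    (d lam : ℝ)
    (hd : diam (u '' U) ≤ d)
    (hlam : 0 < lam)
    (hdet : ∀ᵐ x ∂(volume.restrict U), DifferentiableAt ℝ u x ∧ lam ≤ detD u x) :
    ∃ (S : EuclideanSpace ℝ (Fin n) → EuclideanSpace ℝ (Fin n)) (Ks : NNReal),
      LipschitzOnWith Ks S U ∧ IsBounded (S '' U) ∧
      multOn U S = 1 ∧
      (∃ B : Set (EuclideanSpace ℝ (Fin n)), MeasurableSet B ∧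
        Measure.map S (volume.restrict U) = volume.restrict B) ∧
      (∫ x in U, ‖u x - S x‖)
        ≤ 10 * (d / lam ^ ((n : ℝ))⁻¹) * (1 + lam⁻¹) *
          ∫ x in U, |1 - detD u x| := by
  obtain ⟨hintg, harea⟩ := area_real hUo hu hub hinj hlam hdet
  have hUfin : volume U ≠ ⊤ := hUb.measure_lt_top.ne
  rcases Nat.lt_or_ge n 2 with h2 | h2
  · obtain rfl : n = 1 := by omega
    have := case_one U hne hUo hUb hUc u K hu hub hinj d lam hd hlam hdet
    simpa using this
  have i1 : IntegrableOn (fun x => 1 - detD u x) U := (integrableOn_const hUfin).sub hintg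
  have i3 : IntegrableOn (fun x => |1 - detD u x|) U := i1.abs
  have i2 : IntegrableOn (fun x => max (1 - detD u x) 0) U := i1.pos_part
  set J := ∫ x in U, |1 - detD u x| with hJ
  have hJ0 : 0 ≤ J := integral_nonneg fun x => abs_nonneg _
  rcases hJ0.eq_or_lt with hJz | hJp
  · have h0 := (integral_eq_zero_iff_of_nonneg (fun x => abs_nonneg (1 - detD u x)) i3).1 hJz.symm
    have h1 : ∀ᵐ x ∂volume.restrict U, detD u x = 1 := by
      filter_upwards [h0] with x hx
      have := abs_eq_zero.1 hx
      linarith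
    refine ⟨u, K, hu, hub, hinj, map_eq_case hUo hu hub hinj hlam hdet h1, ?_⟩
    rw [← hJz]
    simp
  obtain ⟨x0, hx0⟩ := hne
  have hn0 : n ≠ 0 := by omega
  have hV : 0 < volume.real U :=
    ENNReal.toReal_pos (hUo.measure_pos volume ⟨x0, hx0⟩).ne' hUfin
  have hd0 : 0 ≤ d := diam_nonneg.trans hd
  have hball : ∀ r : ℝ, 0 ≤ r → volume.real (closedBall (u x0) r) =
      r ^ n * volume.real (ball (0 : EuclideanSpace ℝ (Fin n)) 1) := by
    intro r hr
    rw [measureReal_def, Measure.addHaar_closedBall _ _ hr, ENNReal.toReal_mul,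
      ENNReal.toReal_ofReal (by positivity), finrank_euclideanSpace_fin, measureReal_def]
  have hvb : lam * volume.real U ≤ volume.real (closedBall (u x0) d) := by
    refine vol_bound hUo hUb hu hub hinj hlam hdet hUo.measurableSet le_rfl ?_
      isBounded_closedBall.measure_lt_top.ne
    rintro _ ⟨x, hx, rfl⟩
    exact (dist_le_diam_of_mem hub (mem_image_of_mem u hx) (mem_image_of_mem u hx0)).trans hd
  have hdp : 0 < d := by
    refine lt_of_le_of_ne hd0 fun h => ?_
    rw [hball d hd0, ← h, zero_pow hn0, zero_mul] at hvb
    nlinarith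
  set t := lam ^ ((n : ℝ))⁻¹ with ht
  have ht0 : 0 < t := Real.rpow_pos_of_pos hlam _
  have htn : t ^ n = lam := Real.rpow_inv_natCast_pow hlam.le hn0
  have hli : 0 < lam⁻¹ := inv_pos.2 hlam
  suffices h : ∃ Rm, d ≤ Rm ∧ volume.real U ≤ volume.real (closedBall (u x0) Rm) ∧ ∃ ε > 0,
      (d + Rm) * (∫ x in U, max (1 - detD u x) 0) + ε ≤ 10 * (d / t) * (1 + lam⁻¹) * J by
    obtain ⟨Rm, h1, h3, ε, hε, h4⟩ := h
    obtain ⟨S, Ks, a, b, c, e⟩ := approx h2 hUo hUb hu hub hinj hd hlam hdet hx0 h1 h3 hε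
    obtain ⟨f1, f2, f3, f4⟩ := fin_lemma ⟨x0, hx0⟩ hUo hUb a b c
    exact ⟨S, Ks, f1, f2, f3, f4, e.trans h4⟩
  rcases le_total 1 lam with h1 | h1
  · refine ⟨d, le_rfl, by nlinarith, 10 * (d / t) * (1 + lam⁻¹) * J, by positivity, ?_⟩
    have : ∫ x in U, max (1 - detD u x) 0 = 0 := by
      rw [integral_eq_zero_of_ae]
      filter_upwards [hdet] with x hx
      exact max_eq_right (by linarith [hx.2])
    rw [this]; simp
  · have ht1 : t ≤ 1 := Real.rpow_le_one hlam.le h1 (by positivity)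
    have hdt : d ≤ d / t := by
      rw [le_div_iff₀ ht0]; nlinarith
    refine ⟨d / t, hdt, ?_, d / t * J, by positivity, ?_⟩
    · rw [hball _ (by positivity), div_pow, htn]
      rw [hball d hd0] at hvb
      rw [div_mul_eq_mul_div, le_div_iff₀ hlam]
      linarith
    · have hm : ∫ x in U, max (1 - detD u x) 0 ≤ J :=
        integral_mono i2 i3 fun x => max_le (le_abs_self _) (abs_nonneg _)
      have hp : 0 < d / t := by positivity
      have hpJ : 0 < d / t * J := by positivity
      have s1 : (d + d / t) * (∫ x in U, max (1 - detD u x) 0) ≤ (2 * (d / t)) * J := by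
        refine mul_le_mul (by linarith) hm (integral_nonneg fun x => le_max_right _ _)
          (by positivity)
      have s2 : 10 * (d / t) * (1 + lam⁻¹) * J = 10 * (d / t * J) + 10 * (d / t * J) * lam⁻¹ := by
        ring
      have s3 : 0 < 10 * (d / t * J) * lam⁻¹ := by positivity
      rw [s2]
      linarith

end
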